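/- arXiv:2605.26049 — 7 statements merged into one kernel-verified Lean document; each statement's English description precedes it below -/
import Mathlib

section
/- Let m, n ≥ 1. Let Θ be a nondegenerate real skew-symmetric m×m matrix, let Ψ' be a real skew-symmetric n×n matrix, let M be an n×m integer matrix, and let K be an m×m integer matrix with Kᵀ = −K. Assume Θ = Mᵀ Ψ' M + K (an identity of real matrices, with M and K regarded as real matrices). Then the only integer vector x ∈ ℤ^m with M x = 0 is x = 0 (i.e. x ↦ M x is injective on integer vectors), and consequently m ≤ n. -/
open Matrix

/-- If `Θ` is a nondegenerate real skew-symmetric `m × m` matrix,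
`Ψ'` a real skew-symmetric `n × n` matrix, `M` an `n × m` integer matrix, `K` an
integer skew-symmetric `m × m` matrix, and `Θ = Mᵀ Ψ' M + K` (over ℝ), then
`x ↦ M x` is injective on integer vectors and consequently `m ≤ n`. -/
theorem stmt_0 (m n : ℕ) (hm : 1 ≤ m) (hn : 1 ≤ n)
    (Θ : Matrix (Fin m) (Fin m) ℝ) (hΘskew : Θᵀ = -Θ)
    (hΘnd : ∀ x : Fin m → ℤ,
      (∀ y : Fin m → ℤ, ∃ k : ℤ,
        (fun i => (x i : ℝ)) ⬝ᵥ Θ.mulVec (fun i => (y i : ℝ)) = (k : ℝ)) → x = 0)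
    (Ψ' : Matrix (Fin n) (Fin n) ℝ) (hΨskew : Ψ'ᵀ = -Ψ')
    (M : Matrix (Fin n) (Fin m) ℤ) (K : Matrix (Fin m) (Fin m) ℤ) (hK : Kᵀ = -K)
    (hEq : Θ = (M.map (Int.cast : ℤ → ℝ))ᵀ * Ψ' * M.map (Int.cast : ℤ → ℝ)
        + K.map (Int.cast : ℤ → ℝ)) :
    (∀ x : Fin m → ℤ, M.mulVec x = 0 → x = 0) ∧ m ≤ n := by
  have key : ∀ x : Fin m → ℤ, M.mulVec x = 0 → x = 0 := by
    intro x hx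
    apply hΘnd
    intro y
    refine ⟨x ⬝ᵥ K.mulVec y, ?_⟩
    have h1 : (M.map (Int.cast : ℤ → ℝ)).mulVec (fun i => (x i : ℝ)) = 0 := by
      ext i
      have h := congrFun hx i
      simp only [Matrix.mulVec, dotProduct, Pi.zero_apply, Matrix.map_apply] at h ⊢
      exact_mod_cast h
    rw [hEq, Matrix.add_mulVec, dotProduct_add, Matrix.mul_assoc, ← Matrix.mulVec_mulVec,
      Matrix.dotProduct_mulVec, Matrix.vecMul_transpose, h1, zero_dotProduct, zero_add]
    simp [Matrix.mulVec, dotProduct]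
  refine ⟨key, ?_⟩
  have hinj : Function.Injective M.mulVecLin := by
    rw [injective_iff_map_eq_zero]
    intro x hx
    exact key x (by simpa using hx)
  simpa using LinearMap.finrank_le_finrank_of_injective hinj
end

section
/- Let N ≥ 2 be an integer. Every additive group automorphism α of ℤ × ℤ[1/N] has the form α(a, q) = (ε·a, v·a + u·q) for some ε ∈ {1, −1}, some v ∈ ℤ[1/N], and some unit u of ℤ[1/N] (all products computed in ℚ). -/
theorem aux_hom (N : ℕ) (hN : 2 ≤ N) (H : AddSubgroup ℚ)
    (hH : ∀ q : ℚ, q ∈ H ↔ ∃ a : ℤ, ∃ k : ℕ, q = (a : ℚ) / (N : ℚ) ^ k)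
    (h1 : (1 : ℚ) ∈ H)
    (f : (ℤ × H) →+ (ℤ × H)) (a : ℤ) (q : H) :
    (f (a, q)).1 = (f (1, 0)).1 * a ∧
    ((f (a, q)).2 : ℚ) = ((f (1, 0)).2 : ℚ) * a + ((f (0, ⟨1, h1⟩)).2 : ℚ) * q := by
  have hN0 : (N : ℚ) ≠ 0 := by positivity
  have hdec : ((a, q) : ℤ × H) = a • ((1, 0) : ℤ × H) + (0, q) := by
    ext <;> simp
  have hz : (f (0, q)).1 = 0 := by
    obtain ⟨b, m, hb⟩ := (hH q).1 q.2
    set k := (f (0, q)).1.natAbs with hk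
    have hm : (q : ℚ) / (N : ℚ) ^ k ∈ H := (hH _).2 ⟨b, m + k, by
      rw [hb, pow_add, div_div]⟩
    have e : ((0, q) : ℤ × H) = (N ^ k) • ((0, ⟨_, hm⟩) : ℤ × H) := by
      ext
      · simp
      · simp
        field_simp
    have hd : ((N ^ k : ℕ) : ℤ) ∣ (f (0, q)).1 := by
      rw [e, map_nsmul]
      exact ⟨_, by rw [Prod.smul_fst, nsmul_eq_mul]⟩
    apply Int.eq_zero_of_dvd_of_natAbs_lt_natAbs hd
    rw [← hk, Int.natAbs_natCast]
    exact Nat.lt_pow_self (by omega)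
  have hu : ((f (0, q)).2 : ℚ) = ((f (0, ⟨1, h1⟩)).2 : ℚ) * q := by
    obtain ⟨b, m, hb⟩ := (hH q).1 q.2
    have e : (N ^ m) • ((0, q) : ℤ × H) = b • ((0, ⟨1, h1⟩) : ℤ × H) := by
      ext
      · simp
      · simp [hb]
        field_simp
    have e2 := congrArg (fun x : ℤ × H => (x.2 : ℚ)) (congrArg f e)
    simp only [map_nsmul, map_zsmul] at e2
    simp at e2
    rw [hb]
    field_simp
    linarith
  rw [hdec, map_add, map_zsmul]
  constructor
  · simp [hz, mul_comm]
  · simp [hu, mul_comm]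

/-- For `N ≥ 2`, every additive group automorphism `α` of
`ℤ × ℤ[1/N]` has the form `α (a, q) = (ε·a, v·a + u·q)` with `ε ∈ {1, -1}`,
`v ∈ ℤ[1/N]`, and `u` a unit of `ℤ[1/N]` (products computed in `ℚ`). -/
theorem stmt_3 (N : ℕ) (hN : 2 ≤ N) (H : AddSubgroup ℚ)
    (hH : ∀ q : ℚ, q ∈ H ↔ ∃ a : ℤ, ∃ k : ℕ, q = (a : ℚ) / (N : ℚ) ^ k)
    (α : (ℤ × H) ≃+ (ℤ × H)) :
    ∃ ε : ℤ, (ε = 1 ∨ ε = -1) ∧ ∃ v ∈ H, ∃ u ∈ H,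
      (∃ u' ∈ H, u * u' = 1) ∧
      ∀ (a : ℤ) (q : H),
        (α (a, q)).1 = ε * a ∧ ((α (a, q)).2 : ℚ) = v * (a : ℚ) + u * (q : ℚ) := by
  have h1 : (1 : ℚ) ∈ H := (hH 1).2 ⟨1, 0, by simp⟩
  have A := aux_hom N hN H hH h1 α.toAddMonoidHom
  have B := aux_hom N hN H hH h1 α.symm.toAddMonoidHom
  simp only [AddEquiv.coe_toAddMonoidHom] at A B
  refine ⟨(α (1, 0)).1, ?_, _, (α (1, 0)).2.2, _, (α (0, ⟨1, h1⟩)).2.2,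
    ⟨_, (α.symm (0, ⟨1, h1⟩)).2.2, ?_⟩, A⟩
  · have h := (A (α.symm (1, 0)).1 (α.symm (1, 0)).2).1
    rw [Prod.mk.eta, α.apply_symm_apply] at h
    exact Int.eq_one_or_neg_one_of_mul_eq_one h.symm
  · have h := (A (α.symm (0, ⟨1, h1⟩)).1 (α.symm (0, ⟨1, h1⟩)).2).2
    rw [Prod.mk.eta, α.apply_symm_apply, (B 0 ⟨1, h1⟩).1] at h
    simpa using h.symm
end

section
/- Let N ≥ 2 be an integer. If α is an additive group automorphism of ℤ × ℤ[1/N] satisfying α(1, 0) = (1, 0), then there exists a unit u of ℤ[1/N] such that α(a, q) = (a, u·q) for all (a, q) ∈ ℤ × ℤ[1/N]. -/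
theorem aux_4 (N : ℕ) (hN : 2 ≤ N) (H : AddSubgroup ℚ)
    (hH : ∀ q : ℚ, q ∈ H ↔ ∃ a : ℤ, ∃ k : ℕ, q = (a : ℚ) / (N : ℚ) ^ k)
    (h1 : (1 : ℚ) ∈ H)
    (α : (ℤ × H) ≃+ (ℤ × H)) (hα : α (1, 0) = (1, 0)) (a : ℤ) (q : H) :
    (α (a, q)).1 = a ∧ ((α (a, q)).2 : ℚ) = ((α (0, ⟨1, h1⟩)).2 : ℚ) * (q : ℚ) := by
  have hN0 : (N : ℚ) ≠ 0 := by
    have : N ≠ 0 := by omega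
    exact_mod_cast this
  have hdec : α (a, q) = a • ((1, 0) : ℤ × H) + α (0, q) := by
    have : ((a, q) : ℤ × H) = a • ((1, 0) : ℤ × H) + (0, q) := by
      ext <;> simp
    conv_lhs => rw [this]
    rw [map_add, map_zsmul, hα]
  have hz : (α (0, q)).1 = 0 := by
    have hd : ∀ k : ℕ, ((N : ℤ) ^ k) ∣ (α (0, q)).1 := by
      intro k
      have hm : (q : ℚ) / (N : ℚ) ^ k ∈ H := by
        obtain ⟨b, l, hb⟩ := (hH q).1 q.2
        refine (hH _).2 ⟨b, l + k, ?_⟩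
        rw [hb, pow_add, div_div]
      have he : ((0, q) : ℤ × H) = (N ^ k) • ((0, ⟨_, hm⟩) : ℤ × H) := by
        ext
        · simp
        · simp
          field_simp
      rw [he, map_nsmul]
      exact ⟨(α (0, ⟨_, hm⟩)).1, by simp⟩
    by_contra hne
    have h2 := Int.le_of_dvd (abs_pos.2 hne) ((dvd_abs _ _).2 (hd (α (0, q)).1.natAbs))
    have h3 : (α (0, q)).1.natAbs < N ^ (α (0, q)).1.natAbs := Nat.lt_pow_self (by omega)
    rw [Int.abs_eq_natAbs] at h2
    have h4 : N ^ (α (0, q)).1.natAbs ≤ (α (0, q)).1.natAbs := by exact_mod_cast h2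
    omega
  have hq : ((α (0, q)).2 : ℚ) = ((α (0, ⟨1, h1⟩)).2 : ℚ) * (q : ℚ) := by
    obtain ⟨b, l, hb⟩ := (hH q).1 q.2
    have he : (N ^ l) • ((0, q) : ℤ × H) = b • ((0, ⟨1, h1⟩) : ℤ × H) := by
      ext
      · simp
      · simp [hb]
        field_simp
    have h5 := congrArg (fun x => ((α x).2 : ℚ)) he
    simp only [map_nsmul, map_zsmul, Prod.smul_snd,
      AddSubgroup.coe_nsmul, AddSubgroup.coe_zsmul, nsmul_eq_mul, zsmul_eq_mul] at h5
    push_cast at h5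
    rw [hb]
    field_simp
    linarith
  rw [hdec]
  refine ⟨by simp [hz], by simp [hq]⟩

/-- For `N ≥ 2`, every additive group automorphism `α` of
`ℤ × ℤ[1/N]` fixing `(1, 0)` has the form `α (a, q) = (a, u·q)` for some unit
`u` of `ℤ[1/N]`. -/
theorem stmt_4 (N : ℕ) (hN : 2 ≤ N) (H : AddSubgroup ℚ)
    (hH : ∀ q : ℚ, q ∈ H ↔ ∃ a : ℤ, ∃ k : ℕ, q = (a : ℚ) / (N : ℚ) ^ k)
    (α : (ℤ × H) ≃+ (ℤ × H)) (hα : α (1, 0) = (1, 0)) :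
    ∃ u ∈ H, (∃ u' ∈ H, u * u' = 1) ∧
      ∀ (a : ℤ) (q : H), (α (a, q)).1 = a ∧ ((α (a, q)).2 : ℚ) = u * (q : ℚ) := by
  have h1 : (1 : ℚ) ∈ H := (hH 1).2 ⟨1, 0, by simp⟩
  have hs : α.symm (1, 0) = (1, 0) := by rw [AddEquiv.symm_apply_eq, hα]
  have A := aux_4 N hN H hH h1 α hα
  have B := aux_4 N hN H hH h1 α.symm hs
  refine ⟨_, (α (0, ⟨1, h1⟩)).2.2, ⟨_, (α.symm (0, ⟨1, h1⟩)).2.2, ?_⟩, A⟩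
  have h := (A (α.symm (0, ⟨1, h1⟩)).1 (α.symm (0, ⟨1, h1⟩)).2).2
  rw [Prod.mk.eta, AddEquiv.apply_symm_apply] at h
  exact h.symm
end

section
/- Let N ≥ 2 be an integer and let θ, θ' be irrational real numbers. Suppose α is an additive group automorphism of ℤ × ℤ[1/N] such that α(1, 0) = (1, 0) and such that for every (a, q) ∈ ℤ × ℤ[1/N], writing α(a, q) = (a', q'), one has a' + θ'·q' = a + θ·q as real numbers (rationals coerced to ℝ). Then there exists a unit u of ℤ[1/N] with θ = u·θ'. -/
theorem aux_hom_zero (N : ℕ) (hN : 2 ≤ N) (H : AddSubgroup ℚ)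
    (hH : ∀ q : ℚ, q ∈ H ↔ ∃ a : ℤ, ∃ k : ℕ, q = (a : ℚ) / (N : ℚ) ^ k)
    (f : H →+ ℤ) (q : H) (hq : (q : ℚ) = 1) : f q = 0 := by
  by_contra hne
  have hdvd : ∀ k : ℕ, ((N : ℤ) ^ k) ∣ f q := by
    intro k
    have hm : (1 : ℚ) / (N : ℚ) ^ k ∈ H := (hH _).2 ⟨1, k, by simp⟩
    have hN0 : (N : ℚ) ^ k ≠ 0 := pow_ne_zero _ (by positivity)
    have e : q = (N ^ k : ℕ) • (⟨_, hm⟩ : H) := by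
      apply Subtype.ext
      rw [AddSubgroup.coe_nsmul, hq, nsmul_eq_mul]
      push_cast
      field_simp
    rw [e, map_nsmul, nsmul_eq_mul]
    push_cast
    exact dvd_mul_right _ _
  have h1 := Int.natAbs_dvd_natAbs.2 (hdvd (f q).natAbs)
  have h2 := Nat.le_of_dvd (Int.natAbs_pos.2 hne) h1
  rw [Int.natAbs_pow, Int.natAbs_natCast] at h2
  have h3 := Nat.lt_pow_self (n := (f q).natAbs) (show 1 < N by omega)
  omega


/-- For `N ≥ 2` and irrational `θ, θ'`, if an additive automorphism
`α` of `ℤ × ℤ[1/N]` fixes `(1,0)` and intertwines the trace pairings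
`(a, q) ↦ a + θ·q` and `(a', q') ↦ a' + θ'·q'`, then `θ = u·θ'` for some unit
`u` of `ℤ[1/N]`. -/
theorem stmt_5 (N : ℕ) (hN : 2 ≤ N) (θ θ' : ℝ)
    (hθ : Irrational θ) (hθ' : Irrational θ')
    (H : AddSubgroup ℚ)
    (hH : ∀ q : ℚ, q ∈ H ↔ ∃ a : ℤ, ∃ k : ℕ, q = (a : ℚ) / (N : ℚ) ^ k)
    (α : (ℤ × H) ≃+ (ℤ × H)) (hα1 : α (1, 0) = (1, 0))
    (htrace : ∀ (a : ℤ) (q : H),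
      ((α (a, q)).1 : ℝ) + θ' * (((α (a, q)).2 : ℚ) : ℝ)
        = (a : ℝ) + θ * ((q : ℚ) : ℝ)) :
    ∃ u ∈ H, (∃ u' ∈ H, u * u' = 1) ∧ θ = (u : ℝ) * θ' := by
  have h1 : (1 : ℚ) ∈ H := (hH 1).2 ⟨1, 0, by simp⟩
  let o : H := ⟨1, h1⟩
  have key : ∀ β : (ℤ × H) →+ (ℤ × H), (β (0, o)).1 = 0 := fun β =>
    aux_hom_zero N hN H hH
      ((AddMonoidHom.fst ℤ H).comp (β.comp (AddMonoidHom.inr ℤ H))) o rfl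
  have ka : (α (0, o)).1 = 0 := key α.toAddMonoidHom
  have kb : (α.symm (0, o)).1 = 0 := key α.symm.toAddMonoidHom
  have ta := htrace 0 o
  have tb := htrace (α.symm (0, o)).1 (α.symm (0, o)).2
  rw [Prod.mk.eta, AddEquiv.apply_symm_apply, kb] at tb
  rw [ka] at ta
  have ho : (o : ℚ) = 1 := rfl
  simp only [ho, Int.cast_zero, zero_add, Rat.cast_one, mul_one] at ta tb
  refine ⟨(α (0, o)).2, (α (0, o)).2.2, ⟨(α.symm (0, o)).2, (α.symm (0, o)).2.2, ?_⟩, ?_⟩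
  · have h0 : θ' ≠ 0 := hθ'.ne_zero
    have : (((((α (0, o)).2 : ℚ) * ((α.symm (0, o)).2 : ℚ) : ℚ)) : ℝ) = 1 := by
      push_cast
      apply mul_left_cancel₀ h0
      rw [← mul_assoc, ta, ← tb, mul_one]
    exact_mod_cast this
  · rw [mul_comm]; exact ta.symm
end

section
/- Let N ≥ 2 be an integer. For n ∈ ℕ set s_n = Σ_{k=1}^{n} N^{−k} ∈ ℚ (with s_0 = 0), define F_n : ℤ² → ℤ × ℚ by F_n(a, b) = (a, b/N^n + a·s_n), and let D_N : ℤ² → ℤ² be D_N(a, b) = (a, −a + N·b). Then: (i) F_{n+1}(D_N(a, b)) = F_n(a, b) for every n ∈ ℕ and every (a, b) ∈ ℤ²; (ii) each F_n is injective; (iii) for every m ∈ ℤ and every q ∈ ℤ[1/N] there exist n ∈ ℕ and (a, b) ∈ ℤ² with F_n(a, b) = (m, q). (Thus the maps F_n identify the direct limit of the system (ℤ², D_N) with ℤ × ℤ[1/N], the K₀-computation for the same-dimensional noncorner protorus A_pro^{N,θ₀}.) -/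
/-- With `s_n = ∑_{k=1}^n N^{-k}`, `F_n (a, b) = (a, b/N^n + a·s_n)`,
and `D_N (a, b) = (a, -a + N·b)`, the maps `F_n` are compatible with `D_N`,
injective, and jointly surjective onto `ℤ × ℤ[1/N]`. -/
theorem stmt_8 (N : ℕ) (hN : 2 ≤ N)
    (s : ℕ → ℚ) (hs : ∀ n, s n = ∑ k ∈ Finset.range n, (1 : ℚ) / (N : ℚ) ^ (k + 1))
    (F : ℕ → ℤ × ℤ → ℤ × ℚ)
    (hF : ∀ n (a b : ℤ), F n (a, b) = (a, (b : ℚ) / (N : ℚ) ^ n + (a : ℚ) * s n))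
    (D : ℤ × ℤ → ℤ × ℤ)
    (hD : ∀ a b : ℤ, D (a, b) = (a, -a + (N : ℤ) * b)) :
    (∀ n : ℕ, ∀ x : ℤ × ℤ, F (n + 1) (D x) = F n x) ∧
    (∀ n : ℕ, Function.Injective (F n)) ∧
    (∀ (m : ℤ) (q : ℚ), (∃ c : ℤ, ∃ k : ℕ, q = (c : ℚ) / (N : ℚ) ^ k) →
      ∃ n : ℕ, ∃ x : ℤ × ℤ, F n x = (m, q)) := by
  have hN0 : (N : ℚ) ≠ 0 := by
    have : N ≠ 0 := by omega
    exact_mod_cast this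
  have hsucc : ∀ n, s (n + 1) = s n + 1 / (N : ℚ) ^ (n + 1) := by
    intro n
    rw [hs, hs, Finset.sum_range_succ]
  have hint : ∀ n, ∃ t : ℤ, s n = (t : ℚ) / (N : ℚ) ^ n := by
    intro n
    induction n with
    | zero => exact ⟨0, by simp [hs]⟩
    | succ n ih =>
      obtain ⟨t, ht⟩ := ih
      refine ⟨N * t + 1, ?_⟩
      rw [hsucc, ht]
      push_cast
      field_simp
      ring
  refine ⟨?_, ?_, ?_⟩
  · rintro n ⟨a, b⟩
    rw [hD, hF, hF, hsucc]
    refine Prod.ext rfl ?_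
    push_cast
    field_simp
    ring
  · rintro n ⟨a, b⟩ ⟨c, d⟩ h
    rw [hF, hF, Prod.mk.injEq] at h
    obtain ⟨rfl, h⟩ := h
    have h2 := add_right_cancel h
    rw [div_left_inj' (pow_ne_zero n hN0)] at h2
    have h3 : b = d := by exact_mod_cast h2
    rw [h3]
  · rintro m q ⟨c, k, rfl⟩
    obtain ⟨t, ht⟩ := hint k
    refine ⟨k, (m, c - m * t), ?_⟩
    rw [hF, ht]
    refine Prod.ext rfl ?_
    push_cast
    field_simp
    ring
end

section
/- Let N ≥ 2 be an integer and let θ_0 ∈ (0, 1) be irrational. Define recursively θ_{n+1} = θ_n / (N + θ_n), set s_n = Σ_{k=1}^{n} N^{−k} (with s_0 = 0), and define c_0 = 1 and c_{n+1} = c_n / (1 − θ_{n+1}). Then for every n ∈ ℕ: (i) θ_n ∈ (0, 1) and θ_n is irrational; (ii) c_n = 1 + θ_0·s_n; (iii) c_n·θ_n = θ_0 / N^n. Consequently c_n·(a + b·θ_n) = a + θ_0·(b/N^n + a·s_n) for all integers a, b. -/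
/-- For the recursion `θ_{n+1} = θ_n / (N + θ_n)` with `θ_0 ∈ (0,1)`
irrational, `s_n = ∑_{k=1}^n N^{-k}`, `c_0 = 1`, `c_{n+1} = c_n / (1 - θ_{n+1})`:
(i) each `θ_n` lies in `(0,1)` and is irrational; (ii) `c_n = 1 + θ_0·s_n`;
(iii) `c_n·θ_n = θ_0 / N^n`; consequently
`c_n·(a + b·θ_n) = a + θ_0·(b/N^n + a·s_n)` for all integers `a, b`. -/
theorem stmt_9 (N : ℕ) (hN : 2 ≤ N)
    (θ : ℕ → ℝ) (hθ0 : 0 < θ 0) (hθ1 : θ 0 < 1) (hirr : Irrational (θ 0))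
    (hrec : ∀ n : ℕ, θ (n + 1) = θ n / ((N : ℝ) + θ n))
    (s : ℕ → ℝ) (hs : ∀ n, s n = ∑ k ∈ Finset.range n, (1 : ℝ) / (N : ℝ) ^ (k + 1))
    (c : ℕ → ℝ) (hc0 : c 0 = 1) (hcrec : ∀ n : ℕ, c (n + 1) = c n / (1 - θ (n + 1))) :
    (∀ n : ℕ, (0 < θ n ∧ θ n < 1) ∧ Irrational (θ n)) ∧
    (∀ n : ℕ, c n = 1 + θ 0 * s n) ∧
    (∀ n : ℕ, c n * θ n = θ 0 / (N : ℝ) ^ n) ∧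
    (∀ n : ℕ, ∀ a b : ℤ,
      c n * ((a : ℝ) + (b : ℝ) * θ n)
        = (a : ℝ) + θ 0 * ((b : ℝ) / (N : ℝ) ^ n + (a : ℝ) * s n)) := by
  have hN0 : (2 : ℝ) ≤ (N : ℝ) := by exact_mod_cast hN
  have hNpos : (0 : ℝ) < (N : ℝ) := by linarith
  have h1 : ∀ n : ℕ, (0 < θ n ∧ θ n < 1) ∧ Irrational (θ n) := by
    intro n
    induction n with
    | zero => exact ⟨⟨hθ0, hθ1⟩, hirr⟩
    | succ n ih =>
      obtain ⟨⟨hp, hl⟩, hi⟩ := ih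
      have hd : 0 < (N : ℝ) + θ n := by linarith
      have hlt : θ (n + 1) < 1 := by
        rw [hrec, div_lt_one hd]; linarith
      refine ⟨⟨by rw [hrec]; positivity, hlt⟩, ?_⟩
      rintro ⟨q, hq⟩
      apply hi
      refine ⟨N * q / (1 - q), ?_⟩
      push_cast
      rw [hq]
      have h3 : (1 - θ (n + 1)) ≠ 0 := by linarith
      rw [div_eq_iff h3, hrec]
      field_simp
      ring
  have h23 : ∀ n : ℕ, c n = 1 + θ 0 * s n ∧ c n * θ n = θ 0 / (N : ℝ) ^ n := by
    intro n
    induction n with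
    | zero => simp [hs, hc0]
    | succ n ih =>
      obtain ⟨ha, hb⟩ := ih
      have hp := (h1 n).1.1
      have hd : (N : ℝ) + θ n ≠ 0 := by positivity
      have e1 : 1 - θ (n + 1) = N / (N + θ n) := by
        rw [hrec]; field_simp; ring
      have e2 : c (n + 1) = c n + c n * θ n / N := by
        rw [hcrec, e1]; field_simp
      have e3 : c (n + 1) * θ (n + 1) = c n * θ n / N := by
        rw [hcrec, e1, hrec]; field_simp
      have e4 : s (n + 1) = s n + 1 / (N : ℝ) ^ (n + 1) := by
        rw [hs, hs, Finset.sum_range_succ]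
      constructor
      · rw [e2, hb, e4, ha, pow_succ]; field_simp; ring
      · rw [e3, hb, pow_succ]; field_simp
  refine ⟨h1, fun n => (h23 n).1, fun n => (h23 n).2, fun n a b => ?_⟩
  obtain ⟨ha, hb⟩ := h23 n
  have : c n * ((a : ℝ) + (b : ℝ) * θ n) = c n * a + b * (c n * θ n) := by ring
  rw [this, hb, ha]
  ring
end

section
/- Let α, β, α', β' ∈ ℝ be such that the four real numbers 1, α, β, α·β are linearly independent over ℚ and the four real numbers 1, α', β', α'·β' are linearly independent over ℚ. Then the additive subgroup of ℝ generated by {1, α, β, α·β} equals the additive subgroup of ℝ generated by {1, α', β', α'·β'} if and only if there exists a 4×4 integer matrix G with det G ∈ {1, −1}, whose first column is (1, 0, 0, 0)ᵀ, such that the row-vector identity (1, α', β', α'·β')·G = (1, α, β, α·β) holds over ℝ. (This is the matrix form of the Elliott-invariant classification criterion for the four-dimensional infinitesimal-killing protori A_pro^{α,β}.) -/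
open Matrix

lemma aux_range (a b c d : ℝ) : ({a, b, c, d} : Set ℝ) = Set.range ![a, b, c, d] := by
  ext x
  simp [eq_comm]
  tauto

lemma aux_le (v w : Fin 4 → ℝ) :
    AddSubgroup.closure (Set.range w) ≤ AddSubgroup.closure (Set.range v) ↔
    ∃ G : Matrix (Fin 4) (Fin 4) ℤ, Matrix.vecMul v (G.map (Int.cast : ℤ → ℝ)) = w := by
  have key : ∀ x, x ∈ AddSubgroup.closure (Set.range v) ↔
      ∃ c : Fin 4 → ℤ, ∑ i, c i • v i = x := by
    intro x
    rw [← Submodule.mem_span_range_iff_exists_fun ℤ, ← Submodule.span_int_eq_addSubgroupClosure]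
    rfl
  rw [AddSubgroup.closure_le, Set.range_subset_iff]
  simp only [SetLike.mem_coe, key]
  constructor
  · intro H
    choose c hc using H
    refine ⟨fun i j => c j i, ?_⟩
    ext j
    rw [← hc j]
    simp [Matrix.vecMul, dotProduct, mul_comm]
    rfl
  · rintro ⟨G, hG⟩ j
    refine ⟨fun i => G i j, ?_⟩
    rw [← hG]
    simp [Matrix.vecMul, dotProduct, mul_comm]

lemma aux_uniq (v : Fin 4 → ℝ) (h : LinearIndependent ℚ v)
    (A B : Matrix (Fin 4) (Fin 4) ℤ)
    (hAB : Matrix.vecMul v (A.map (Int.cast : ℤ → ℝ)) = Matrix.vecMul v (B.map (Int.cast : ℤ → ℝ))) :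
    A = B := by
  ext i j
  have h1 := congrFun hAB j
  simp only [Matrix.vecMul, dotProduct, Matrix.map_apply] at h1
  have h2 := Fintype.linearIndependent_iff.1 h (fun i => ((A i j - B i j : ℤ) : ℚ)) (by
    simp only [Rat.smul_def]
    push_cast
    simp only [sub_mul, Finset.sum_sub_distrib]
    simp only [mul_comm (v _)] at h1
    linarith) i
  have h3 : A i j - B i j = 0 := by exact_mod_cast h2
  omega

lemma aux_map_mul (A B : Matrix (Fin 4) (Fin 4) ℤ) :
    (A * B).map (Int.cast : ℤ → ℝ) = A.map (Int.cast : ℤ → ℝ) * B.map (Int.cast : ℤ → ℝ) :=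
  Matrix.map_mul (f := Int.castRingHom ℝ)

lemma aux_map_one : (1 : Matrix (Fin 4) (Fin 4) ℤ).map (Int.cast : ℤ → ℝ) = 1 :=
  Matrix.map_one _ (by simp) (by simp)

/-- If `1, α, β, αβ` and `1, α', β', α'β'` are each linearly
independent over `ℚ`, then the additive subgroups of `ℝ` they generate coincide
iff there is an integer matrix `G` with `det G = ±1`, first column
`(1,0,0,0)ᵀ`, and `(1, α', β', α'β')·G = (1, α, β, αβ)` as real row vectors. -/
theorem stmt_19 (α β α' β' : ℝ)
    (h : LinearIndependent ℚ ![(1 : ℝ), α, β, α * β])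
    (h' : LinearIndependent ℚ ![(1 : ℝ), α', β', α' * β']) :
    AddSubgroup.closure {(1 : ℝ), α, β, α * β}
      = AddSubgroup.closure {(1 : ℝ), α', β', α' * β'} ↔
    ∃ G : Matrix (Fin 4) (Fin 4) ℤ,
      (G.det = 1 ∨ G.det = -1) ∧
      (G 0 0 = 1 ∧ G 1 0 = 0 ∧ G 2 0 = 0 ∧ G 3 0 = 0) ∧
      Matrix.vecMul ![(1 : ℝ), α', β', α' * β'] (G.map (Int.cast : ℤ → ℝ))
        = ![(1 : ℝ), α, β, α * β] := by
  rw [aux_range, aux_range, le_antisymm_iff, aux_le, aux_le]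
  constructor
  · rintro ⟨⟨G, hG⟩, ⟨K, hK⟩⟩
    refine ⟨G, ?_, ?_, hG⟩
    · have e : G * K = 1 := aux_uniq _ h' _ _ (by
        rw [aux_map_mul, aux_map_one, ← Matrix.vecMul_vecMul, hG, hK, Matrix.vecMul_one])
      have e2 : G.det * K.det = 1 := by rw [← Matrix.det_mul, e, Matrix.det_one]
      exact Int.isUnit_iff.1 (IsUnit.of_mul_eq_one _ e2)
    · have h1 := congrFun hG 0
      simp only [Matrix.vecMul, dotProduct, Matrix.map_apply] at h1
      have h2 := Fintype.linearIndependent_iff.1 h'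
        (fun i => ((G i 0 - (if i = 0 then 1 else 0) : ℤ) : ℚ)) (by
          simp [Fin.sum_univ_four, Rat.smul_def] at h1 ⊢
          linarith)
      have h3 : ∀ i, G i 0 - (if i = 0 then 1 else 0) = 0 := fun i => by exact_mod_cast h2 i
      have a0 := h3 0
      have a1 := h3 1
      have a2 := h3 2
      have a3 := h3 3
      simp at a0 a1 a2 a3
      exact ⟨by omega, a1, a2, a3⟩
  · rintro ⟨G, hd, -, hG⟩
    refine ⟨⟨G, hG⟩, G⁻¹, ?_⟩
    have hu : IsUnit G.det := Int.isUnit_iff.2 hd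
    rw [← hG, Matrix.vecMul_vecMul, ← aux_map_mul, Matrix.mul_nonsing_inv _ hu, aux_map_one,
      Matrix.vecMul_one]
end
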